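/- Let A ∈ SL(2,ℝ). There exist H, K ∈ SL(2,ℝ) with tr H = tr K = 0 and A = H·K if and only if |tr A| > 2 or A = ±1. -/

import Mathlib

open Matrix

lemma aux_fwd (a b c x y z : ℝ) (h1 : -(a*a) - b*c = 1) (h2 : -(x*x) - y*z = 1)
    (ht : |2*(a*x)+b*z+c*y| ≤ 2) : (x = a ∧ y = b ∧ z = c) ∨ (x = -a ∧ y = -b ∧ z = -c) := by
  obtain ⟨l, u⟩ := abs_le.1 ht
  have hb : b ≠ 0 := by rintro rfl; nlinarith [mul_self_nonneg a]
  have hy : y ≠ 0 := by rintro rfl; nlinarith [mul_self_nonneg x]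
  have key : (b*y) * (2*(a*x)+b*z+c*y) = -(b*x-a*y)^2 - b^2 - y^2 := by
    linear_combination (-b^2) * h2 + (-y^2) * h1
  rcases lt_or_gt_of_ne (mul_ne_zero hb hy) with h | h
  · right
    have e : (b*x-a*y)^2 + (b+y)^2 ≤ 0 := by nlinarith
    have e1 : y = -b := by
      have : (b+y)^2 = 0 := by nlinarith [sq_nonneg (b*x-a*y), sq_nonneg (b+y)]
      have := pow_eq_zero_iff (two_ne_zero) |>.1 this
      linarith
    have e2 : b*x-a*y = 0 := by
      have : (b*x-a*y)^2 = 0 := by nlinarith [sq_nonneg (b*x-a*y), sq_nonneg (b+y)]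
      exact pow_eq_zero_iff (two_ne_zero) |>.1 this
    subst e1
    have e3 : x = -a := mul_left_cancel₀ hb (by linarith)
    subst e3
    exact ⟨rfl, rfl, mul_left_cancel₀ hb (by linarith)⟩
  · left
    have e : (b*x-a*y)^2 + (b-y)^2 ≤ 0 := by nlinarith
    have e1 : y = b := by
      have : (b-y)^2 = 0 := by nlinarith [sq_nonneg (b*x-a*y), sq_nonneg (b-y)]
      have := pow_eq_zero_iff (two_ne_zero) |>.1 this
      linarith
    have e2 : b*x-a*y = 0 := by
      have : (b*x-a*y)^2 = 0 := by nlinarith [sq_nonneg (b*x-a*y), sq_nonneg (b-y)]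
      exact pow_eq_zero_iff (two_ne_zero) |>.1 this
    subst e1
    have e3 : x = a := mul_left_cancel₀ hb (by linarith)
    subst e3
    exact ⟨rfl, rfl, mul_left_cancel₀ hb (by linarith)⟩

lemma aux_mul (A : Matrix.SpecialLinearGroup (Fin 2) ℝ) (H K : Matrix (Fin 2) (Fin 2) ℝ)
    (hH : H.det = 1) (hK : K.det = 1) (tH : H.trace = 0) (tK : K.trace = 0)
    (h : (A : Matrix (Fin 2) (Fin 2) ℝ) = H * K) :
    ∃ H K : Matrix.SpecialLinearGroup (Fin 2) ℝ,
        Matrix.trace (H : Matrix (Fin 2) (Fin 2) ℝ) = 0 ∧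
        Matrix.trace (K : Matrix (Fin 2) (Fin 2) ℝ) = 0 ∧ A = H * K :=
  ⟨⟨H, hH⟩, ⟨K, hK⟩, tH, tK, Subtype.ext h⟩

lemma aux_bwd (p q r s : ℝ) (h : p*s-q*r = 1) (ht : 2 < |p+s|) :
    ∃ a b c : ℝ, -(a*a) - b*c = 1 ∧ a*p+b*r+c*q-a*s = 0 := by
  have hD : 0 < (p-s)^2+4*(q*r) := by
    have : 2^2 < |p+s|^2 := by gcongr
    rw [sq_abs] at this
    nlinarith
  obtain ⟨D, hDe⟩ : ∃ D, D = (p-s)^2+4*(q*r) := ⟨_, rfl⟩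
  rw [← hDe] at hD
  have hm : 0 < D^2+(r-q)^2*D := by positivity
  obtain ⟨m, hme⟩ : ∃ m, m = √(D^2+(r-q)^2*D) := ⟨_, rfl⟩
  have hm0 : 0 < m := hme ▸ Real.sqrt_pos.2 hm
  have hm2 : m^2 = D^2+(r-q)^2*D := hme ▸ Real.sq_sqrt hm.le
  refine ⟨-(r-q)*(p-s)/m, (D-2*(r-q)*q)/m, (-D-2*(r-q)*r)/m, ?_, ?_⟩
  · field_simp
    rw [hm2, hDe]; ring
  · field_simp
    rw [hDe]; ring

/-- `A ∈ SL(2,ℝ)` factors as a product of two trace-zero elements of `SL(2,ℝ)`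
(half-turns) iff `|tr A| > 2` or `A = ±1`. -/
theorem stmt_10 (A : Matrix.SpecialLinearGroup (Fin 2) ℝ) :
    (∃ H K : Matrix.SpecialLinearGroup (Fin 2) ℝ,
        Matrix.trace (H : Matrix (Fin 2) (Fin 2) ℝ) = 0 ∧
        Matrix.trace (K : Matrix (Fin 2) (Fin 2) ℝ) = 0 ∧ A = H * K) ↔
      2 < |Matrix.trace (A : Matrix (Fin 2) (Fin 2) ℝ)| ∨ A = 1 ∨ A = -1 := by
  constructor
  · rintro ⟨H, K, hH, hK, rfl⟩
    by_cases ht : 2 < |Matrix.trace ((H * K : Matrix.SpecialLinearGroup (Fin 2) ℝ) : Matrix (Fin 2) (Fin 2) ℝ)|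
    · exact Or.inl ht
    right
    have dH := H.det_coe
    have dK := K.det_coe
    rw [Matrix.det_fin_two] at dH dK
    rw [Matrix.trace_fin_two] at hH hK
    have eH : H 1 1 = - H 0 0 := by linarith
    have eK : K 1 1 = - K 0 0 := by linarith
    rw [eH] at dH
    rw [eK] at dK
    have := aux_fwd (H 0 0) (H 0 1) (H 1 0) (K 0 0) (K 0 1) (K 1 0) (by linarith) (by linarith) (by
      rw [not_lt] at ht
      refine le_of_eq_of_le (congrArg _ ?_) ht
      rw [Matrix.trace_fin_two, Matrix.SpecialLinearGroup.coe_mul, Matrix.mul_apply, Matrix.mul_apply,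
        Fin.sum_univ_two, Fin.sum_univ_two, eH, eK]
      ring)
    rcases this with ⟨h1, h2, h3⟩ | ⟨h1, h2, h3⟩
    · right
      ext i j
      fin_cases i <;> fin_cases j <;>
        simp [Matrix.mul_apply, Fin.sum_univ_two, eH, eK, h1, h2, h3] <;> linarith
    · left
      ext i j
      fin_cases i <;> fin_cases j <;>
        simp [Matrix.mul_apply, Fin.sum_univ_two, eH, eK, h1, h2, h3] <;> linarith
  · rintro (h | rfl | rfl)
    · have dA := A.det_coe
      rw [Matrix.det_fin_two] at dA
      rw [Matrix.trace_fin_two] at h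
      obtain ⟨a, b, c, h1, h2⟩ := aux_bwd _ _ _ _ dA h
      refine aux_mul A !![a, b; c, -a]
        !![-(a * A 0 0 + b * A 1 0), -(a * A 0 1 + b * A 1 1);
          -(c * A 0 0 - a * A 1 0), -(c * A 0 1 - a * A 1 1)] ?_ ?_ ?_ ?_ ?_
      · rw [Matrix.det_fin_two_of]; linarith
      · rw [Matrix.det_fin_two_of]
        linear_combination (-(a*a)-b*c) * dA + h1
      · simp [Matrix.trace_fin_two]
      · simp [Matrix.trace_fin_two]; linarith
      · ext i j
        fin_cases i <;> fin_cases j <;> simp [Matrix.mul_apply, Fin.sum_univ_two]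
        · linear_combination (-A 0 0) * h1
        · linear_combination (-A 0 1) * h1
        · linear_combination (-A 1 0) * h1
        · linear_combination (-A 1 1) * h1
    · refine aux_mul _ !![0, 1; -1, 0] !![0, -1; 1, 0] (by simp [Matrix.det_fin_two_of])
        (by simp [Matrix.det_fin_two_of]) (by simp [Matrix.trace_fin_two])
        (by simp [Matrix.trace_fin_two]) ?_
      ext i j
      fin_cases i <;> fin_cases j <;> simp [Matrix.mul_apply, Fin.sum_univ_two]
    · refine aux_mul _ !![0, 1; -1, 0] !![0, 1; -1, 0] (by simp [Matrix.det_fin_two_of])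
        (by simp [Matrix.det_fin_two_of]) (by simp [Matrix.trace_fin_two])
        (by simp [Matrix.trace_fin_two]) ?_
      ext i j
      fin_cases i <;> fin_cases j <;> simp [Matrix.mul_apply, Fin.sum_univ_two]
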